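/- arXiv:2011.00119 — 2 statements merged into one kernel-verified Lean document; each statement's English description precedes it below -/
import Mathlib

section
/- Let k > 0 and let X be an integrable real-valued random variable on a probability space. Then for every q ∈ ℝ the random variable ρ_k(X − q) is integrable, and the function F(q) = E[ρ_k(X − q)] is differentiable at every q ∈ ℝ with derivative F'(q) = −E[ψ_k(X − q)]. -/
open MeasureTheory

/-- The Huber influence function `ψ_k(t) = max (min t k) (-k)`. -/
noncomputable def huberPsi (k t : ℝ) : ℝ := max (min t k) (-k)

/-- The Huber loss `ρ_k(t) = t²/2` for `|t| ≤ k` and `ρ_k(t) = k|t| − k²/2` otherwise. -/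
noncomputable def huberRho (k t : ℝ) : ℝ :=
  if |t| ≤ k then t ^ 2 / 2 else k * |t| - k ^ 2 / 2

/-!
`ρ_k` is the convex conjugate of `p ↦ p² / 2` restricted to `[-k, k]`, that is,
`ρ_k(t) = max_{|p| ≤ k} (p t - p² / 2)`, and the maximum is attained at `p = ψ_k(t)`. Hence `ψ_k` is
a continuous selection of subgradients of `ρ_k`, which forces `ρ_k' = ψ_k`. As `|ψ_k| ≤ k`, the loss
is `k`-Lipschitz, so dominated convergence with the constant bound `k` lets one differentiate under
the expectation.
-/

open Filter Topology
open scoped NNReal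

theorem hasFDerivAt_of_forall_subgradient_le {E : Type*} [NormedAddCommGroup E] [NormedSpace ℝ E]
    {f : E → ℝ} {g : E → E →L[ℝ] ℝ} {x : E} (hg : ContinuousAt g x)
    (hfg : ∀ y z, f y + g y (z - y) ≤ f z) : HasFDerivAt f (g x) x := by
  have remainder_le (y : E) : ‖f y - f x - g x (y - x)‖ ≤ ‖g y - g x‖ * ‖y - x‖ := by
    have lower : 0 ≤ f y - f x - g x (y - x) := by linarith [hfg x y]
    have upper : f y - f x - g x (y - x) ≤ (g y - g x) (y - x) := by
      have := hfg y x
      rw [← neg_sub y x, map_neg] at this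
      rw [sub_apply]
      linarith
    rw [Real.norm_of_nonneg lower]
    exact upper.trans <| (Real.le_norm_self _).trans <| (g y - g x).le_opNorm _
  have slope_tendsto : Tendsto (fun y => ‖g y - g x‖) (𝓝 x) (𝓝 0) :=
    tendsto_iff_norm_sub_tendsto_zero.1 hg
  refine .of_isLittleO <| Asymptotics.isLittleO_iff.2 fun c hc => ?_
  filter_upwards [slope_tendsto.eventually_le_const hc] with y hy
  exact (remainder_le y).trans <| mul_le_mul_of_nonneg_right hy (norm_nonneg _)

section Integral

variable {Ω E : Type*} [MeasurableSpace Ω] {μ : Measure Ω} [IsFiniteMeasure μ]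
  [NormedAddCommGroup E] {K : ℝ≥0}

theorem integrable_comp_of_lipschitzWith {F : Type*} [NormedAddCommGroup F] {f : F → E} {X : Ω → F}
    (hf : LipschitzWith K f) (hX : Integrable X μ) : Integrable (fun ω => f (X ω)) μ := by
  have bound_integrable : Integrable (fun ω => ‖f 0‖ + K * ‖X ω‖) μ :=
    (integrable_const _).add (hX.norm.const_mul _)
  refine bound_integrable.mono' (hf.continuous.comp_aestronglyMeasurable hX.1) <|
    .of_forall fun ω => ?_
  calc ‖f (X ω)‖ ≤ ‖f 0‖ + ‖f (X ω) - f 0‖ := norm_le_norm_add_norm_sub' _ _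
    _ ≤ ‖f 0‖ + K * ‖X ω‖ := by simpa using hf.norm_sub_le (X ω) 0

theorem hasDerivAt_integral_comp_sub_of_lipschitzWith [NormedSpace ℝ E] [CompleteSpace E]
    {f : ℝ → E} {X : Ω → ℝ} {q : ℝ} (hf : LipschitzWith K f) (hX : Integrable X μ)
    (hdiff : ∀ᵐ ω ∂μ, DifferentiableAt ℝ f (X ω - q)) :
    HasDerivAt (fun q' => ∫ ω, f (X ω - q') ∂μ) (-∫ ω, deriv f (X ω - q) ∂μ) q := by
  have hXq (q' : ℝ) : Integrable (fun ω => X ω - q') μ := hX.sub (integrable_const q')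
  have hfX (q' : ℝ) : Integrable (fun ω => f (X ω - q')) μ :=
    integrable_comp_of_lipschitzWith hf (hXq q')
  have deriv_meas : AEStronglyMeasurable (fun ω => -deriv f (X ω - q)) μ :=
    ((stronglyMeasurable_deriv f).aestronglyMeasurable.comp_aemeasurable (hXq q).aemeasurable).neg
  have lipschitz (ω : Ω) : LipschitzWith K fun q' => f (X ω - q') := by
    simpa [Function.comp_def] using hf.comp ((LipschitzWith.const (X ω)).sub LipschitzWith.id)
  rw [← integral_neg]
  refine (hasDerivAt_integral_of_dominated_loc_of_lip (bound := fun _ => (K : ℝ)) univ_mem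
    (.of_forall fun q' => (hfX q').1) (hfX q) deriv_meas (.of_forall fun ω => ?_)
    (integrable_const _) ?_).2
  · simpa using lipschitz ω
  · filter_upwards [hdiff] with ω hω
    exact hω.hasDerivAt.comp_const_sub (X ω) q

end Integral

section Huber

variable {k : ℝ}

theorem continuous_huberPsi : Continuous (huberPsi k) := by
  unfold huberPsi
  fun_prop

theorem abs_huberPsi_le (hk : 0 ≤ k) (t : ℝ) : |huberPsi k t| ≤ k :=
  abs_le.2 ⟨le_max_right _ _, max_le (min_le_right _ _) (by linarith)⟩

theorem mul_sub_sq_div_two_le_huberRho {p : ℝ} (hp : |p| ≤ k) (t : ℝ) :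
    p * t - p ^ 2 / 2 ≤ huberRho k t := by
  unfold huberRho
  split_ifs with ht
  · linarith [sq_nonneg (t - p)]
  · have : p * t ≤ |p| * |t| := (le_abs_self _).trans_eq (abs_mul p t)
    rw [← sq_abs p]
    nlinarith

theorem huberRho_eq_huberPsi_mul_sub (hk : 0 ≤ k) (t : ℝ) :
    huberRho k t = huberPsi k t * t - huberPsi k t ^ 2 / 2 := by
  unfold huberRho huberPsi
  split_ifs with ht
  · rw [min_eq_left (abs_le.1 ht).2, max_eq_left (abs_le.1 ht).1]
    ring
  · rcases lt_abs.1 (not_le.1 ht) with hkt | hkt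
    · rw [min_eq_right hkt.le, max_eq_left (by linarith), abs_of_pos (by linarith)]
    · rw [min_eq_left (by linarith), max_eq_right (by linarith), abs_of_neg (by linarith)]
      ring

theorem huberRho_add_huberPsi_mul_sub_le (hk : 0 ≤ k) (s t : ℝ) :
    huberRho k s + huberPsi k s * (t - s) ≤ huberRho k t := by
  calc huberRho k s + huberPsi k s * (t - s) = huberPsi k s * t - huberPsi k s ^ 2 / 2 := by
        rw [huberRho_eq_huberPsi_mul_sub hk]; ring
    _ ≤ huberRho k t := mul_sub_sq_div_two_le_huberRho (abs_huberPsi_le hk s) t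

theorem hasDerivAt_huberRho (hk : 0 ≤ k) (t : ℝ) : HasDerivAt (huberRho k) (huberPsi k t) t := by
  refine hasDerivAt_iff_hasFDerivAt.2 <| hasFDerivAt_of_forall_subgradient_le
    (g := fun s => ContinuousLinearMap.toSpanSingleton ℝ (huberPsi k s)) ?_ fun s u => ?_
  · exact ((ContinuousLinearMap.toSpanSingletonLIE ℝ ℝ).continuous.comp
      continuous_huberPsi).continuousAt
  · simpa [mul_comm] using huberRho_add_huberPsi_mul_sub_le hk s u

theorem deriv_huberRho (hk : 0 ≤ k) : deriv (huberRho k) = huberPsi k :=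
  funext fun t => (hasDerivAt_huberRho hk t).deriv

theorem lipschitzWith_huberRho (hk : 0 ≤ k) : LipschitzWith k.toNNReal (huberRho k) := by
  refine lipschitzWith_of_nnnorm_deriv_le
    (fun t => (hasDerivAt_huberRho hk t).differentiableAt) fun t => ?_
  rw [deriv_huberRho hk, ← NNReal.coe_le_coe, coe_nnnorm, Real.coe_toNNReal k hk]
  exact abs_huberPsi_le hk t

end Huber

theorem integrable_huberRho_and_hasDerivAt_expected_huberRho_general
    {Ω : Type*} [MeasurableSpace Ω] (μ : Measure Ω) [IsFiniteMeasure μ]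
    (k : ℝ) (hk : 0 ≤ k) (X : Ω → ℝ) (hX : Integrable X μ) :
    (∀ q : ℝ, Integrable (fun ω => huberRho k (X ω - q)) μ) ∧
    (∀ q : ℝ, HasDerivAt (fun q' : ℝ => ∫ ω, huberRho k (X ω - q') ∂μ)
      (-∫ ω, huberPsi k (X ω - q) ∂μ) q) := by
  refine ⟨fun q => ?_, fun q => ?_⟩
  · exact integrable_comp_of_lipschitzWith (lipschitzWith_huberRho hk)
      (hX.sub (integrable_const q))
  · rw [← deriv_huberRho hk]
    exact hasDerivAt_integral_comp_sub_of_lipschitzWith (lipschitzWith_huberRho hk) hX <|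
      .of_forall fun ω => (hasDerivAt_huberRho hk (X ω - q)).differentiableAt

/-- For an integrable real random variable `X`, the Huber loss
`ρ_k(X − q)` is integrable for every `q`, and `q ↦ E[ρ_k(X − q)]` is differentiable
with derivative `−E[ψ_k(X − q)]`. -/
theorem integrable_huberRho_and_hasDerivAt_expected_huberRho
    {Ω : Type*} [MeasurableSpace Ω] (P : Measure Ω) [IsProbabilityMeasure P]
    (k : ℝ) (hk : 0 < k) (X : Ω → ℝ) (hX : Integrable X P) :
    (∀ q : ℝ, Integrable (fun ω => huberRho k (X ω - q)) P) ∧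
    (∀ q : ℝ, HasDerivAt (fun q' : ℝ => ∫ ω, huberRho k (X ω - q') ∂P)
      (-∫ ω, huberPsi k (X ω - q) ∂P) q) :=
  integrable_huberRho_and_hasDerivAt_expected_huberRho_general P k hk.le X hX
end

section
/- (Algebraic core of Corollary 1 of the paper.) Let Υ be an n×n positive definite real matrix and Ψ an n×m real matrix such that ΨᵀΥ⁻¹Ψ is invertible. Then the matrix Υ − Ψ(ΨᵀΥ⁻¹Ψ)⁻¹Ψᵀ is positive semidefinite. -/
open Matrix

/-! Consider the block matrix `[[Υ, Ψ], [Ψᴴ, ΨᴴΥ⁻¹Ψ]]`. The Schur complement of its block `Υ` is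
zero, so the whole matrix is positive semidefinite; hence so is the Schur complement
`Υ - Ψ(ΨᴴΥ⁻¹Ψ)⁻¹Ψᴴ` of its other diagonal block, which is positive definite because its
invertibility forces `Ψ` to be injective. -/

section

variable {m n : Type*} [Fintype n]

lemma mulVec_injective_of_isUnit_mul {R : Type*} [Semiring R] [Fintype m] [DecidableEq m]
    {A : Matrix m n R} {B : Matrix n m R} (hAB : IsUnit (A * B)) :
    Function.Injective B.mulVec := by
  refine Function.Injective.of_comp (f := A.mulVec) ?_
  simpa only [Function.comp_def, mulVec_mulVec] using mulVec_injective_of_isUnit hAB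

lemma posSemidef_fromBlocks_conjTranspose_mul_inv_mul {R : Type*} [CommRing R] [PartialOrder R]
    [StarRing R] [StarOrderedRing R] [Finite m] [DecidableEq n] {A : Matrix n n R}
    (hA : A.PosDef) [Invertible A] (B : Matrix n m R) :
    (fromBlocks A B Bᴴ (Bᴴ * A⁻¹ * B)).PosSemidef := by
  rw [PosDef.fromBlocks₁₁ _ _ hA, sub_self]
  exact PosSemidef.zero

lemma posDef_conjTranspose_mul_inv_mul_of_isUnit {K : Type*} [Field K] [PartialOrder K]
    [StarRing K] [Fintype m] [DecidableEq m] [DecidableEq n] {A : Matrix n n K} (hA : A.PosDef)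
    {B : Matrix n m K} (hB : IsUnit (Bᴴ * A⁻¹ * B)) :
    (Bᴴ * A⁻¹ * B).PosDef :=
  hA.inv.conjTranspose_mul_mul_same (mulVec_injective_of_isUnit_mul hB)

theorem envelope_gmm_efficiency_core_general {K : Type*} [Field K] [PartialOrder K]
    [StarRing K] [StarOrderedRing K] [Fintype m] [DecidableEq m] [DecidableEq n]
    {Υ : Matrix n n K} (hΥ : Υ.PosDef) {Ψ : Matrix n m K} (hΨ : IsUnit (Ψᴴ * Υ⁻¹ * Ψ)) :
    (Υ - Ψ * (Ψᴴ * Υ⁻¹ * Ψ)⁻¹ * Ψᴴ).PosSemidef := by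
  have := hΥ.isUnit.invertible
  have := hΨ.invertible
  have hblocks : (fromBlocks Υ Ψ Ψᴴ (Ψᴴ * Υ⁻¹ * Ψ)).PosSemidef :=
    posSemidef_fromBlocks_conjTranspose_mul_inv_mul hΥ Ψ
  have hpivot : (Ψᴴ * Υ⁻¹ * Ψ).PosDef := posDef_conjTranspose_mul_inv_mul_of_isUnit hΥ hΨ
  exact (PosDef.fromBlocks₂₂ Υ Ψ hpivot).mp hblocks

end

/-- (Algebraic core of Corollary 1.) If `Υ ≻ 0` and `ΨᵀΥ⁻¹Ψ` is
invertible, then `Υ − Ψ(ΨᵀΥ⁻¹Ψ)⁻¹Ψᵀ` is positive semidefinite. -/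
theorem envelope_gmm_efficiency_core
    (n m : ℕ) (Υ : Matrix (Fin n) (Fin n) ℝ) (hΥ : Υ.PosDef)
    (Ψ : Matrix (Fin n) (Fin m) ℝ) (hΨ : IsUnit (Ψᵀ * Υ⁻¹ * Ψ)) :
    (Υ - Ψ * (Ψᵀ * Υ⁻¹ * Ψ)⁻¹ * Ψᵀ).PosSemidef := by
  rw [← conjTranspose_eq_transpose_of_trivial] at hΨ ⊢
  exact envelope_gmm_efficiency_core_general hΥ hΨ
end
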